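/- Key identity of Appendix B (z-independence of Γ_{ij}): Let τ lie in the complex upper half-plane and let u, x, y ∈ ℂ be such that all theta-function values appearing in denominators below are nonzero. Then S''(u+x,τ)·S'(x,τ)·[−ζ₁(u+y, τ/2) + ζ₁(y−x, τ/2) + 2ζ₂(u+x, τ)] − S''(x,τ)·S'(u+x,τ)·[−ζ₁(y, τ/2) + ζ₁(y−x, τ/2) + 2ζ₂(x, τ)] + 2 S'(u+x,τ)·S'(x,τ)·[℘₂(x,τ) − ℘₂(u+x,τ)] = S''(x−y,τ)·[S'(y,τ) S'(u+x,τ) − S'(x,τ) S'(u+y,τ)]. (With x = ξ_i, y = ξ_j, this identity shows that the ratio ∂_{λ_j}Q(u(z),ξ_i,τ) / (Q(u(z),ξ_j,τ) − Q(u(z),ξ_i,τ)), where Q(u,ξ,τ) = S'(u+ξ,τ)/S'(ξ,τ), is independent of z and equals Γ_{ij} = −(1/(4πi))(S'(ξ_j)/S'(ξ_i)) S''(ξ_i−ξ_j) ∂τ/∂λ_j along solutions of the elliptic Löwner and Gibbons–Tsarev systems.) -/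

import Mathlib

open Complex

/-- Jacobi theta function θ₁(u,τ). -/
noncomputable def theta1 (u τ : ℂ) : ℂ :=
  -∑' k : ℤ, Complex.exp ((Real.pi : ℂ) * Complex.I * τ * ((k : ℂ) + 1/2)^2
      + 2 * (Real.pi : ℂ) * Complex.I * (u + 1/2) * ((k : ℂ) + 1/2))

/-- Jacobi theta function θ₂(u,τ). -/
noncomputable def theta2 (u τ : ℂ) : ℂ :=
  ∑' k : ℤ, Complex.exp ((Real.pi : ℂ) * Complex.I * τ * ((k : ℂ) + 1/2)^2
      + 2 * (Real.pi : ℂ) * Complex.I * u * ((k : ℂ) + 1/2))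

/-- Jacobi theta function θ₃(u,τ). -/
noncomputable def theta3 (u τ : ℂ) : ℂ :=
  ∑' k : ℤ, Complex.exp ((Real.pi : ℂ) * Complex.I * τ * (k : ℂ)^2
      + 2 * (Real.pi : ℂ) * Complex.I * u * (k : ℂ))

/-- Jacobi theta function θ₄(u,τ). -/
noncomputable def theta4 (u τ : ℂ) : ℂ :=
  ∑' k : ℤ, Complex.exp ((Real.pi : ℂ) * Complex.I * τ * (k : ℂ)^2
      + 2 * (Real.pi : ℂ) * Complex.I * (u + 1/2) * (k : ℂ))

/-- ζ_a(u,τ) = θ_a'(u,τ)/θ_a(u,τ). -/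
noncomputable def zeta1 (u τ : ℂ) : ℂ := deriv (fun v => theta1 v τ) u / theta1 u τ
noncomputable def zeta2 (u τ : ℂ) : ℂ := deriv (fun v => theta2 v τ) u / theta2 u τ
noncomputable def zeta3 (u τ : ℂ) : ℂ := deriv (fun v => theta3 v τ) u / theta3 u τ
noncomputable def zeta4 (u τ : ℂ) : ℂ := deriv (fun v => theta4 v τ) u / theta4 u τ

/-- ℘_a(u,τ) = −∂_u ζ_a(u,τ). -/
noncomputable def wp1 (u τ : ℂ) : ℂ := -deriv (fun v => zeta1 v τ) u
noncomputable def wp2 (u τ : ℂ) : ℂ := -deriv (fun v => zeta2 v τ) u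
noncomputable def wp1' (u τ : ℂ) : ℂ := deriv (fun v => wp1 v τ) u
noncomputable def wp2' (u τ : ℂ) : ℂ := deriv (fun v => wp2 v τ) u

/-- S'(u,τ) = ζ₁(u,τ) − ζ₄(u,τ). -/
noncomputable def Sp (u τ : ℂ) : ℂ := zeta1 u τ - zeta4 u τ
/-- S''(u,τ) = ∂_u S'(u,τ). -/
noncomputable def Spp (u τ : ℂ) : ℂ := deriv (fun v => Sp v τ) u
/-- S'''(u,τ) = ∂_u S''(u,τ). -/
noncomputable def Sppp (u τ : ℂ) : ℂ := deriv (fun v => Spp v τ) u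

/-- Partial derivative in the j-th coordinate of a ℂ-valued function on ℝ^N. -/
noncomputable def pdC {N : ℕ} (j : Fin N) (f : (Fin N → ℝ) → ℂ) (x : Fin N → ℝ) : ℂ :=
  fderiv ℝ f x (Pi.single j 1)

/-- Partial derivative in the j-th coordinate of an ℝ-valued function on ℝ^d. -/
noncomputable def pd {d : ℕ} (j : Fin d) (f : (Fin d → ℝ) → ℝ) (x : Fin d → ℝ) : ℝ :=
  fderiv ℝ f x (Pi.single j 1)

/-!
With `κ = θ₁'(0, τ/2) / θ₂(0, τ/2)`, the function `S'` is the elliptic function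
`κ θ₂(u, τ/2) / θ₁(u, τ/2)`, and it satisfies the addition formula
`S'(a + b) (ζ₁(a, τ/2) + ζ₁(b, τ/2) - 2 ζ₂(a + b, τ)) = S'(a) S'(b) + κ²`.
Differentiating in `a` removes the constant. Two instances of the result, with `a = x - y` and
`b = y` or `b = u + y`, share the term `℘₁(a, τ/2)`; eliminating it gives the key identity.

The addition formula comes from the classical product formula
`θ₂(x, τ/2) θ₂(y, τ/2) = θ₂(x + y, τ) θ₃(x - y, τ) + θ₃(x + y, τ) θ₂(x - y, τ)`
and its translates by `1/2`, differentiated once along `x + y = const`.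
-/

/-- Splitting of the pairs `(m, n)` of integers by the parity of `m - n`: the summands are
parametrised by `(l + k, l - k)` and `(l + k, l - k - 1)`. It rearranges a product of two theta
series into a sum of two such products. -/
def intProdParityEquiv : (ℤ × ℤ) ⊕ (ℤ × ℤ) ≃ ℤ × ℤ where
  toFun := Sum.elim (fun p ↦ (p.1 + p.2, p.1 - p.2)) (fun p ↦ (p.1 + p.2, p.1 - p.2 - 1))
  invFun q := if (q.1 - q.2) % 2 = 0 then Sum.inl ((q.1 + q.2) / 2, (q.1 - q.2) / 2)
    else Sum.inr ((q.1 + q.2 + 1) / 2, (q.1 - q.2) / 2)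
  left_inv := by
    rintro (⟨l, k⟩ | ⟨l, k⟩)
    · have h : (l + k - (l - k)) % 2 = 0 := by lia
      simp only [Sum.elim_inl, h, if_true]
      congr 2 <;> lia
    · have h : ¬ (l + k - (l - k - 1)) % 2 = 0 := by lia
      simp only [Sum.elim_inr, h, if_false]
      congr 2 <;> lia
  right_inv := by
    rintro ⟨m, n⟩
    by_cases h : (m - n) % 2 = 0
    · simp only [h, if_true, Sum.elim_inl]
      congr 1 <;> lia
    · simp only [h, if_false, Sum.elim_inr]
      congr 1 <;> lia

theorem hasSum_prod_mul {ι κ R : Type*} [NormedRing R] [NormedSpace ℝ R] [FiniteDimensional ℝ R]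
    {f : ι → R} {g : κ → R} {a b : R} (hf : HasSum f a) (hg : HasSum g b) :
    HasSum (fun p : ι × κ ↦ f p.1 * g p.2) (a * b) :=
  have : CompleteSpace R := FiniteDimensional.complete ℝ R
  hf.mul hg (summable_mul_of_summable_norm hf.summable.norm hg.summable.norm)

theorem differentiableAt_logDeriv {𝕜 : Type*} [NontriviallyNormedField 𝕜] [CompleteSpace 𝕜]
    {f : 𝕜 → 𝕜} {x : 𝕜} (hf : AnalyticAt 𝕜 f x) (hx : f x ≠ 0) :
    DifferentiableAt 𝕜 (logDeriv f) x :=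
  (hf.deriv.div hf hx).differentiableAt

theorem theta2_term_eq (k : ℤ) (u τ : ℂ) :
    cexp (Real.pi * I * τ * (k + 1 / 2) ^ 2 + 2 * Real.pi * I * u * (k + 1 / 2))
      = cexp (Real.pi * I * τ / 4 + Real.pi * I * u) * jacobiTheta₂_term k (u + τ / 2) τ := by
  rw [jacobiTheta₂_term, ← Complex.exp_add]
  ring_nf

theorem theta2_eq_exp_mul_jacobiTheta₂ (u τ : ℂ) :
    theta2 u τ = cexp (Real.pi * I * τ / 4 + Real.pi * I * u) * jacobiTheta₂ (u + τ / 2) τ := by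
  simp only [theta2, theta2_term_eq, tsum_mul_left, jacobiTheta₂]

theorem theta3_term_eq (k : ℤ) (u τ : ℂ) :
    cexp (Real.pi * I * τ * k ^ 2 + 2 * Real.pi * I * u * k) = jacobiTheta₂_term k u τ := by
  rw [jacobiTheta₂_term]
  ring_nf

theorem theta3_eq_jacobiTheta₂ (u τ : ℂ) : theta3 u τ = jacobiTheta₂ u τ := by
  simp only [theta3, theta3_term_eq, jacobiTheta₂]

theorem hasSum_theta2 {τ : ℂ} (hτ : 0 < τ.im) (u : ℂ) :
    HasSum (fun k : ℤ ↦ cexp (Real.pi * I * τ * (k + 1 / 2) ^ 2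
      + 2 * Real.pi * I * u * (k + 1 / 2))) (theta2 u τ) := by
  simp only [theta2_term_eq, theta2_eq_exp_mul_jacobiTheta₂]
  exact (hasSum_jacobiTheta₂_term _ hτ).mul_left _

theorem hasSum_theta3 {τ : ℂ} (hτ : 0 < τ.im) (u : ℂ) :
    HasSum (fun k : ℤ ↦ cexp (Real.pi * I * τ * k ^ 2 + 2 * Real.pi * I * u * k))
      (theta3 u τ) := by
  simp only [theta3_term_eq, theta3_eq_jacobiTheta₂]
  exact hasSum_jacobiTheta₂_term _ hτ

theorem theta1_eq_neg_theta2_add_half (u τ : ℂ) : theta1 u τ = -theta2 (u + 1 / 2) τ := rfl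

theorem theta4_eq_theta3_add_half (u τ : ℂ) : theta4 u τ = theta3 (u + 1 / 2) τ := rfl

theorem theta2_add_one (u τ : ℂ) : theta2 (u + 1) τ = -theta2 u τ := by
  rw [theta2_eq_exp_mul_jacobiTheta₂, theta2_eq_exp_mul_jacobiTheta₂, add_right_comm u 1,
    jacobiTheta₂_add_left, mul_add, ← add_assoc, mul_one, Complex.exp_add, Complex.exp_pi_mul_I]
  ring

theorem theta3_add_one (u τ : ℂ) : theta3 (u + 1) τ = theta3 u τ := by
  simp only [theta3_eq_jacobiTheta₂, jacobiTheta₂_add_left]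

theorem theta2_neg (u τ : ℂ) : theta2 (-u) τ = theta2 u τ := by
  rw [theta2, theta2, ← (Equiv.subLeft (-1 : ℤ)).tsum_eq]
  refine tsum_congr fun k ↦ ?_
  simp only [Equiv.subLeft_apply]
  push_cast
  ring_nf

theorem theta3_neg (u τ : ℂ) : theta3 (-u) τ = theta3 u τ := by
  simp only [theta3_eq_jacobiTheta₂, jacobiTheta₂_neg_left]

theorem theta1_add_half (u τ : ℂ) : theta1 (u + 1 / 2) τ = theta2 u τ := by
  rw [theta1_eq_neg_theta2_add_half, add_assoc, add_halves, theta2_add_one, neg_neg]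

theorem theta2_add_half (u τ : ℂ) : theta2 (u + 1 / 2) τ = -theta1 u τ := by
  rw [theta1_eq_neg_theta2_add_half, neg_neg]

theorem theta4_add_half (u τ : ℂ) : theta4 (u + 1 / 2) τ = theta3 u τ := by
  rw [theta4_eq_theta3_add_half, add_assoc, add_halves, theta3_add_one]

theorem theta1_neg (u τ : ℂ) : theta1 (-u) τ = -theta1 u τ := by
  rw [theta1_eq_neg_theta2_add_half, ← theta2_neg, neg_add, neg_neg, ← theta1_add_half]
  ring_nf

theorem theta1_zero (τ : ℂ) : theta1 0 τ = 0 :=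
  self_eq_neg.mp (by simpa using theta1_neg 0 τ)

theorem theta4_neg (u τ : ℂ) : theta4 (-u) τ = theta4 u τ := by
  rw [theta4_eq_theta3_add_half, ← theta3_neg, neg_add, neg_neg, ← theta4_add_half]
  ring_nf

theorem differentiable_theta2 {τ : ℂ} (hτ : 0 < τ.im) : Differentiable ℂ (theta2 · τ) := by
  have hJ : Differentiable ℂ (jacobiTheta₂ · τ) := fun z ↦ differentiableAt_jacobiTheta₂_fst z hτ
  simp only [theta2_eq_exp_mul_jacobiTheta₂]
  fun_prop

theorem differentiable_theta3 {τ : ℂ} (hτ : 0 < τ.im) : Differentiable ℂ (theta3 · τ) := by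
  simp only [theta3_eq_jacobiTheta₂]
  exact fun z ↦ differentiableAt_jacobiTheta₂_fst z hτ

theorem differentiable_theta1 {τ : ℂ} (hτ : 0 < τ.im) : Differentiable ℂ (theta1 · τ) := by
  have := differentiable_theta2 hτ
  simp only [theta1_eq_neg_theta2_add_half]
  fun_prop

theorem differentiable_theta4 {τ : ℂ} (hτ : 0 < τ.im) : Differentiable ℂ (theta4 · τ) := by
  have := differentiable_theta3 hτ
  simp only [theta4_eq_theta3_add_half]
  fun_prop

theorem deriv_theta1_add_half (u τ : ℂ) :
    deriv (theta1 · τ) (u + 1 / 2) = deriv (theta2 · τ) u := by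
  simp only [← deriv_comp_add_const, theta1_add_half]

theorem deriv_theta4_add_half (u τ : ℂ) :
    deriv (theta4 · τ) (u + 1 / 2) = deriv (theta3 · τ) u := by
  simp only [← deriv_comp_add_const, theta4_add_half]

theorem zeta1_neg (u τ : ℂ) : zeta1 (-u) τ = -zeta1 u τ := by
  have deriv_even : deriv (theta1 · τ) (-u) = deriv (theta1 · τ) u := by
    have h := deriv_comp_neg (theta1 · τ) u
    simp only [theta1_neg, deriv.fun_neg] at h
    exact (neg_inj.mp h).symm
  rw [zeta1, zeta1, deriv_even, theta1_neg, div_neg]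

theorem half_im_pos {τ : ℂ} (hτ : 0 < τ.im) : 0 < (τ / 2).im := by
  simpa using hτ

section ProductFormulas

variable {τ : ℂ} (hτ : 0 < τ.im)
include hτ

theorem theta2_mul_theta2 (x y : ℂ) :
    theta2 x (τ / 2) * theta2 y (τ / 2)
      = theta2 (x + y) τ * theta3 (x - y) τ + theta3 (x + y) τ * theta2 (x - y) τ := by
  have even_part := hasSum_prod_mul (hasSum_theta2 hτ (x + y)) (hasSum_theta3 hτ (x - y))
  have odd_part := hasSum_prod_mul (hasSum_theta3 hτ (x + y)) (hasSum_theta2 hτ (x - y))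
  have product := hasSum_prod_mul (hasSum_theta2 (half_im_pos hτ) x)
    (hasSum_theta2 (half_im_pos hτ) y)
  rw [← intProdParityEquiv.hasSum_iff] at product
  refine product.unique (HasSum.sum (even_part.congr_fun ?_) (odd_part.congr_fun ?_))
  all_goals
    rintro ⟨l, k⟩
    simp only [Function.comp_apply, intProdParityEquiv, Equiv.coe_fn_mk, Sum.elim_inl,
      Sum.elim_inr, ← Complex.exp_add]
    push_cast
    ring_nf

theorem theta1_mul_theta2 (x y : ℂ) :
    theta1 x (τ / 2) * theta2 y (τ / 2)
      = theta1 (x + y) τ * theta4 (x - y) τ + theta4 (x + y) τ * theta1 (x - y) τ := by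
  simp only [theta1_eq_neg_theta2_add_half, theta4_eq_theta3_add_half]
  rw [neg_mul, theta2_mul_theta2 hτ, add_right_comm, add_sub_right_comm]
  ring

theorem theta2_mul_theta1 (x y : ℂ) :
    theta2 x (τ / 2) * theta1 y (τ / 2)
      = theta1 (x + y) τ * theta4 (x - y) τ - theta4 (x + y) τ * theta1 (x - y) τ := by
  rw [mul_comm, theta1_mul_theta2 hτ, ← neg_sub x y, theta1_neg, theta4_neg, add_comm y x]
  ring

theorem theta2_zero_mul_theta1 (x : ℂ) :
    theta2 0 (τ / 2) * theta1 x (τ / 2) = 2 * (theta1 x τ * theta4 x τ) := by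
  rw [mul_comm, theta1_mul_theta2 hτ, add_zero, sub_zero]
  ring

theorem theta2_zero_mul_theta2 (x : ℂ) :
    theta2 0 (τ / 2) * theta2 x (τ / 2) = 2 * (theta2 x τ * theta3 x τ) := by
  rw [mul_comm, theta2_mul_theta2 hτ, add_zero, sub_zero]
  ring

theorem theta2_zero_mul_deriv_theta1 (x : ℂ) :
    theta2 0 (τ / 2) * deriv (theta1 · (τ / 2)) x
      = 2 * (deriv (theta1 · τ) x * theta4 x τ + theta1 x τ * deriv (theta4 · τ) x) := by
  have lhs := ((differentiable_theta1 (half_im_pos hτ)) x).hasDerivAt.const_mul (theta2 0 (τ / 2))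
  have rhs := ((differentiable_theta1 hτ x).hasDerivAt.fun_mul
    (differentiable_theta4 hτ x).hasDerivAt).const_mul 2
  simp only [theta2_zero_mul_theta1 hτ] at lhs
  exact lhs.unique rhs

theorem theta2_zero_mul_deriv_theta2 (x : ℂ) :
    theta2 0 (τ / 2) * deriv (theta2 · (τ / 2)) x
      = 2 * (deriv (theta2 · τ) x * theta3 x τ + theta2 x τ * deriv (theta3 · τ) x) := by
  have lhs := ((differentiable_theta2 (half_im_pos hτ)) x).hasDerivAt.const_mul (theta2 0 (τ / 2))
  have rhs := ((differentiable_theta2 hτ x).hasDerivAt.fun_mul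
    (differentiable_theta3 hτ x).hasDerivAt).const_mul 2
  simp only [theta2_zero_mul_theta2 hτ] at lhs
  exact lhs.unique rhs

theorem deriv_theta2_mul_theta1_sub (x y : ℂ) :
    deriv (theta2 · (τ / 2)) x * theta1 y (τ / 2) - theta2 x (τ / 2) * deriv (theta1 · (τ / 2)) y
      = 2 * (theta1 (x + y) τ * deriv (theta4 · τ) (x - y)
        - theta4 (x + y) τ * deriv (theta1 · τ) (x - y)) := by
  have lhs : HasDerivAt (fun e ↦ theta2 (x + e) (τ / 2) * theta1 (y - e) (τ / 2))
      (deriv (theta2 · (τ / 2)) x * theta1 y (τ / 2)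
        - theta2 x (τ / 2) * deriv (theta1 · (τ / 2)) y) 0 := by
    have h2 := (differentiable_theta2 (half_im_pos hτ) (x + 0)).hasDerivAt.comp_const_add
    have h1 := (differentiable_theta1 (half_im_pos hτ) (y - 0)).hasDerivAt.comp_const_sub
    simpa [sub_eq_add_neg] using h2.fun_mul h1
  have rhs : HasDerivAt (fun e ↦ theta1 (x + y) τ * theta4 (x - y + 2 * e) τ
        - theta4 (x + y) τ * theta1 (x - y + 2 * e) τ)
      (theta1 (x + y) τ * (deriv (theta4 · τ) (x - y) * 2)
        - theta4 (x + y) τ * (deriv (theta1 · τ) (x - y) * 2)) 0 := by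
    have inner : HasDerivAt (fun e : ℂ ↦ x - y + 2 * e) 2 0 := by
      simpa using ((hasDerivAt_id (0 : ℂ)).const_mul 2).const_add (x - y)
    have h4 := (differentiable_theta4 hτ (x - y)).hasDerivAt.comp_of_eq 0 inner (by simp)
    have h1 := (differentiable_theta1 hτ (x - y)).hasDerivAt.comp_of_eq 0 inner (by simp)
    exact (h4.const_mul _).sub (h1.const_mul _)
  have product (e : ℂ) : theta2 (x + e) (τ / 2) * theta1 (y - e) (τ / 2)
      = theta1 (x + y) τ * theta4 (x - y + 2 * e) τ
        - theta4 (x + y) τ * theta1 (x - y + 2 * e) τ := by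
    rw [theta2_mul_theta1 hτ]
    ring_nf
  simp only [product] at lhs
  linear_combination lhs.unique rhs

theorem deriv_theta1_zero_mul_theta2 (x : ℂ) :
    deriv (theta1 · (τ / 2)) 0 * theta2 x (τ / 2)
      = 2 * (deriv (theta1 · τ) x * theta4 x τ - theta1 x τ * deriv (theta4 · τ) x) := by
  have h := deriv_theta2_mul_theta1_sub hτ x 0
  rw [theta1_zero, add_zero, sub_zero] at h
  linear_combination -h

theorem deriv_theta1_zero_mul_theta1 (x : ℂ) :
    deriv (theta1 · (τ / 2)) 0 * theta1 x (τ / 2)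
      = 2 * (theta2 x τ * deriv (theta3 · τ) x - deriv (theta2 · τ) x * theta3 x τ) := by
  have h := deriv_theta1_zero_mul_theta2 hτ (x + 1 / 2)
  rw [deriv_theta1_add_half, deriv_theta4_add_half, theta1_add_half, theta2_add_half,
    theta4_add_half] at h
  linear_combination -h

end ProductFormulas

theorem theta2_zero_mul_theta2_add {τ : ℂ} (hτ : 0 < τ.im) (a b : ℂ) :
    theta2 0 τ * (theta2 (a + b) τ
          * (deriv (theta1 · τ) a * theta1 b τ + theta1 a τ * deriv (theta1 · τ) b)
        - deriv (theta2 · τ) (a + b) * (theta1 a τ * theta1 b τ))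
      = deriv (theta1 · τ) 0 * (theta2 a τ * theta2 b τ * theta1 (a + b) τ) := by
  obtain ⟨τ, rfl⟩ : ∃ τ', τ = τ' / 2 := ⟨2 * τ, by ring⟩
  replace hτ : 0 < τ.im := by simpa using hτ
  have wronskian := deriv_theta2_mul_theta1_sub hτ (a + b) a
  have difference := theta2_mul_theta1 hτ (a + b) a
  have sum := theta1_mul_theta2 hτ (a + b) a
  rw [add_sub_cancel_left] at wronskian difference sum
  -- Up to constants, `θ₁(b)`, `θ₁'(b)` and `θ₂(b)` at `τ/2` are bilinear in the values and
  -- derivatives of `θ₁`, `θ₄` at `(b, τ)`, and the relations for `(a + b, a)` have `x - y = b`.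
  linear_combination
    (theta2 (a + b) (τ / 2) * deriv (theta1 · (τ / 2)) a
        - deriv (theta2 · (τ / 2)) (a + b) * theta1 a (τ / 2)) * theta2_zero_mul_theta1 hτ b
      + theta2 (a + b) (τ / 2) * theta1 a (τ / 2) * theta2_zero_mul_deriv_theta1 hτ b
      - theta1 (a + b) (τ / 2) * theta2 a (τ / 2) * deriv_theta1_zero_mul_theta2 hτ b
      - 2 * theta1 b τ * theta4 b τ * wronskian
      + 2 * deriv (theta1 · τ) b * theta4 b τ * (difference - sum)
      + 2 * theta1 b τ * deriv (theta4 · τ) b * (difference + sum)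

section AdditionFormula

/-- The constant `κ(τ)` in the factorisation `S'(u, τ) = κ(τ) θ₂(u, τ/2) / θ₁(u, τ/2)`. -/
noncomputable def spCoeff (τ : ℂ) : ℂ := deriv (theta1 · (τ / 2)) 0 / theta2 0 (τ / 2)

variable {τ : ℂ} (hτ : 0 < τ.im)
include hτ

theorem theta2_zero_mul_theta1_ne_zero {x : ℂ} (h1 : theta1 x τ ≠ 0) (h4 : theta4 x τ ≠ 0) :
    theta2 0 (τ / 2) * theta1 x (τ / 2) ≠ 0 := by
  rw [theta2_zero_mul_theta1 hτ]
  exact mul_ne_zero two_ne_zero (mul_ne_zero h1 h4)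

theorem theta1_half_ne_zero {x : ℂ} (h1 : theta1 x τ ≠ 0) (h4 : theta4 x τ ≠ 0) :
    theta1 x (τ / 2) ≠ 0 :=
  right_ne_zero_of_mul (theta2_zero_mul_theta1_ne_zero hτ h1 h4)

theorem Sp_eq_spCoeff_mul {x : ℂ} (h1 : theta1 x τ ≠ 0) (h4 : theta4 x τ ≠ 0) :
    Sp x τ = spCoeff τ * (theta2 x (τ / 2) / theta1 x (τ / 2)) := by
  rw [spCoeff, div_mul_div_comm, deriv_theta1_zero_mul_theta2 hτ, theta2_zero_mul_theta1 hτ, Sp,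
    zeta1, zeta4]
  field_simp

theorem two_mul_zeta2_mul_theta2 {x : ℂ} (h2 : theta2 x τ ≠ 0) (h0 : theta2 0 (τ / 2) ≠ 0) :
    2 * zeta2 x τ * theta2 x (τ / 2)
      = deriv (theta2 · (τ / 2)) x - spCoeff τ * theta1 x (τ / 2) := by
  have hζ : zeta2 x τ * theta2 x τ = deriv (theta2 · τ) x := div_mul_cancel₀ _ h2
  rw [spCoeff]
  apply mul_left_cancel₀ h0
  field_simp
  linear_combination 2 * zeta2 x τ * theta2_zero_mul_theta2 hτ x
    - theta2_zero_mul_deriv_theta2 hτ x + deriv_theta1_zero_mul_theta1 hτ x + 4 * theta3 x τ * hζ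

theorem differentiableAt_Sp {x : ℂ} (h1 : theta1 x τ ≠ 0) (h4 : theta4 x τ ≠ 0) :
    DifferentiableAt ℂ (Sp · τ) x :=
  (differentiableAt_logDeriv ((differentiable_theta1 hτ).analyticAt _) h1).fun_sub
    (differentiableAt_logDeriv ((differentiable_theta4 hτ).analyticAt _) h4)

variable {a b : ℂ} (ha1 : theta1 a τ ≠ 0) (ha4 : theta4 a τ ≠ 0)
    (hb1 : theta1 b τ ≠ 0) (hb4 : theta4 b τ ≠ 0)
    (hab1 : theta1 (a + b) τ ≠ 0) (hab2 : theta2 (a + b) τ ≠ 0) (hab4 : theta4 (a + b) τ ≠ 0)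
include ha1 ha4 hb1 hb4 hab1 hab2 hab4

theorem Sp_add_mul :
    Sp (a + b) τ * (zeta1 a (τ / 2) + zeta1 b (τ / 2) - 2 * zeta2 (a + b) τ)
      = Sp a τ * Sp b τ + spCoeff τ ^ 2 := by
  have h0 := left_ne_zero_of_mul (theta2_zero_mul_theta1_ne_zero hτ ha1 ha4)
  have ha := theta1_half_ne_zero hτ ha1 ha4
  have hb := theta1_half_ne_zero hτ hb1 hb4
  have hab := theta1_half_ne_zero hτ hab1 hab4
  have zeta2_eq := two_mul_zeta2_mul_theta2 hτ hab2 h0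
  have addition : theta2 (a + b) (τ / 2) * (deriv (theta1 · (τ / 2)) a * theta1 b (τ / 2)
          + theta1 a (τ / 2) * deriv (theta1 · (τ / 2)) b)
        - deriv (theta2 · (τ / 2)) (a + b) * (theta1 a (τ / 2) * theta1 b (τ / 2))
      = spCoeff τ * (theta2 a (τ / 2) * theta2 b (τ / 2) * theta1 (a + b) (τ / 2)) := by
    rw [spCoeff, div_mul_eq_mul_div, ← theta2_zero_mul_theta2_add (half_im_pos hτ) a b,
      mul_div_cancel_left₀ _ h0]
  rw [Sp_eq_spCoeff_mul hτ ha1 ha4, Sp_eq_spCoeff_mul hτ hb1 hb4, Sp_eq_spCoeff_mul hτ hab1 hab4,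
    zeta1, zeta1]
  field_simp
  linear_combination spCoeff τ * addition
    - spCoeff τ * theta1 a (τ / 2) * theta1 b (τ / 2) * zeta2_eq

theorem eventually_Sp_add_mul :
    ∀ᶠ v in nhds a, Sp (v + b) τ * (zeta1 v (τ / 2) + zeta1 b (τ / 2) - 2 * zeta2 (v + b) τ)
      = Sp v τ * Sp b τ + spCoeff τ ^ 2 := by
  have translate : Filter.Tendsto (· + b) (nhds a) (nhds (a + b)) :=
    (continuous_add_const b).tendsto a
  filter_upwards [(differentiable_theta1 hτ a).continuousAt.eventually_ne ha1,
    (differentiable_theta4 hτ a).continuousAt.eventually_ne ha4,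
    translate ((differentiable_theta1 hτ _).continuousAt.eventually_ne hab1),
    translate ((differentiable_theta2 hτ _).continuousAt.eventually_ne hab2),
    translate ((differentiable_theta4 hτ _).continuousAt.eventually_ne hab4)]
    with v hv1 hv4 hvb1 hvb2 hvb4
  exact Sp_add_mul hτ hv1 hv4 hb1 hb4 hvb1 hvb2 hvb4

theorem Spp_add_mul :
    Spp (a + b) τ * (zeta1 a (τ / 2) + zeta1 b (τ / 2) - 2 * zeta2 (a + b) τ)
        + Sp (a + b) τ * (2 * wp2 (a + b) τ - wp1 a (τ / 2))
      = Spp a τ * Sp b τ := by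
  have dSpa : HasDerivAt (Sp · τ) (Spp a τ) a :=
    (differentiableAt_Sp hτ ha1 ha4).hasDerivAt
  have dSpab : HasDerivAt (fun v ↦ Sp (v + b) τ) (Spp (a + b) τ) a :=
    (differentiableAt_Sp hτ hab1 hab4).hasDerivAt.comp_add_const
  have dζ1 : HasDerivAt (zeta1 · (τ / 2)) (-wp1 a (τ / 2)) a := by
    rw [wp1, neg_neg]
    exact (differentiableAt_logDeriv ((differentiable_theta1 (half_im_pos hτ)).analyticAt _)
      (theta1_half_ne_zero hτ ha1 ha4)).hasDerivAt
  have dζ2 : HasDerivAt (fun v ↦ zeta2 (v + b) τ) (-wp2 (a + b) τ) a := by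
    rw [wp2, neg_neg]
    exact (differentiableAt_logDeriv
      ((differentiable_theta2 hτ).analyticAt _) hab2).hasDerivAt.comp_add_const
  have lhs := dSpab.fun_mul ((dζ1.add_const (zeta1 b (τ / 2))).fun_sub (dζ2.const_mul 2))
  have rhs := (dSpa.mul_const (Sp b τ)).add_const (spCoeff τ ^ 2)
  have h := (rhs.congr_of_eventuallyEq
    (eventually_Sp_add_mul hτ ha1 ha4 hb1 hb4 hab1 hab2 hab4)).unique lhs
  linear_combination -h

end AdditionFormula

/-- Key identity of Appendix B: the identity behind the z-independence of the
ratio ∂_{λ_j}Q/(Q_j − Q_i), i.e. of the coefficients Γ_{ij}. -/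
theorem appendixB_key_identity (τ u x y : ℂ) (hτ : 0 < τ.im)
    (h1 : theta1 (u + x) τ ≠ 0) (h2 : theta4 (u + x) τ ≠ 0)
    (h3 : theta1 x τ ≠ 0) (h4 : theta4 x τ ≠ 0)
    (h5 : theta1 y τ ≠ 0) (h6 : theta4 y τ ≠ 0)
    (h7 : theta1 (u + y) τ ≠ 0) (h8 : theta4 (u + y) τ ≠ 0)
    (h9 : theta1 (x - y) τ ≠ 0) (h10 : theta4 (x - y) τ ≠ 0)
    (h11 : theta1 (u + y) (τ / 2) ≠ 0) (h12 : theta1 (y - x) (τ / 2) ≠ 0)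
    (h13 : theta1 y (τ / 2) ≠ 0)
    (h14 : theta2 (u + x) τ ≠ 0) (h15 : theta2 x τ ≠ 0) :
    Spp (u + x) τ * Sp x τ
        * (-zeta1 (u + y) (τ / 2) + zeta1 (y - x) (τ / 2) + 2 * zeta2 (u + x) τ)
      - Spp x τ * Sp (u + x) τ
        * (-zeta1 y (τ / 2) + zeta1 (y - x) (τ / 2) + 2 * zeta2 x τ)
      + 2 * Sp (u + x) τ * Sp x τ * (wp2 x τ - wp2 (u + x) τ)
      = Spp (x - y) τ * (Sp y τ * Sp (u + x) τ - Sp x τ * Sp (u + y) τ) := by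
  have eq_x : x - y + y = x := sub_add_cancel x y
  have eq_ux : x - y + (u + y) = u + x := by ring
  have at_ux := Spp_add_mul hτ h9 h10 h7 h8 (by rwa [eq_ux]) (by rwa [eq_ux]) (by rwa [eq_ux])
  have at_x := Spp_add_mul hτ h9 h10 h5 h6 (by rwa [eq_x]) (by rwa [eq_x]) (by rwa [eq_x])
  rw [eq_ux] at at_ux
  rw [eq_x] at at_x
  rw [← neg_sub x y, zeta1_neg]
  linear_combination Sp (u + x) τ * at_x - Sp x τ * at_ux
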